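/- (Growth of the quartic interaction coefficients Ā and B̄) For all i, j, l, m ∈ ℕ, |∫₀^{π/2} (e_i'(x)/ω_i)·(e_j'(x)/ω_j)·e_l(x)·(e_m'(x)/ω_m)·sin³(x)/cos(x) dx| ≤ (8/π)·ω_l and |∫₀^{π/2} e_i(x)·e_j(x)·e_l(x)·(e_m'(x)/ω_m)·sin³(x)/cos(x) dx| ≤ (8/π)·ω_l; i.e. the Fourier constants Ā_{ijl}^{(m)} and B̄_{ijl}^{(m)} are O(ω_l). -/

import Mathlib

open Real MeasureTheory

/-- The AdS linearized eigenvalue `ω_j = 2j + 3`. -/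
noncomputable def ω (j : ℕ) : ℝ := 2 * j + 3

/-- The AdS linearized eigenfunction
`e_j(x) = (2/√π)·(ω_j² − 1)^(−1/2)·(ω_j·sin(ω_j x)/tan x − cos(ω_j x))`. -/
noncomputable def e (j : ℕ) (x : ℝ) : ℝ :=
  (2 / Real.sqrt Real.pi) * (Real.sqrt (ω j ^ 2 - 1))⁻¹ *
    (ω j * Real.sin (ω j * x) / Real.tan x - Real.cos (ω j * x))

/-- The derivative of the AdS linearized eigenfunction,
`e_j'(x) = (2/√π)·ω_j·(ω_j² − 1)^(−1/2)·(ω_j·cos(ω_j x)/tan x − sin(ω_j x)/tan² x)`. -/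
noncomputable def e' (j : ℕ) (x : ℝ) : ℝ :=
  (2 / Real.sqrt Real.pi) * ω j * (Real.sqrt (ω j ^ 2 - 1))⁻¹ *
    (ω j * Real.cos (ω j * x) / Real.tan x - Real.sin (ω j * x) / Real.tan x ^ 2)

/-!
Put `p_j = tan · e_j'/ω_j` and `q_j = tan · e_j`. An explicit antiderivative of `p_j²` shows that
`p_j` has norm one in `L²(0, π/2)`, and so has `q_j`, which is `± p_j(π/2 - ·)`. The two integrands
are `p_i p_j e_l p_m cos²` and `q_i q_j e_l p_m cos²`, so both integrals are at most
`sup |e_l| · sup |p_m|`. Extracting `sin ((ω_j - 1) x) / sin x`, which is at most `ω_j - 1` in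
absolute value, from both `e_j` and `p_j` gives `|e_l| ≤ (2/√π) ω_l` and `|p_m| ≤ 4/√π`, whose
product is `(8/π) ω_l`.
-/

theorem norm_integral_le_of_norm_le_mul_abs_mul_abs {α E : Type*} [MeasurableSpace α]
    {μ : Measure α} [NormedAddCommGroup E] [NormedSpace ℝ E] {F : α → E} {u v : α → ℝ} {K : ℝ}
    (hK : 0 ≤ K) (hu : ∫ x, u x ^ 2 ∂μ = 1) (hv : ∫ x, v x ^ 2 ∂μ = 1)
    (hF : ∀ᵐ x ∂μ, ‖F x‖ ≤ K * (|u x| * |v x|)) : ‖∫ x, F x ∂μ‖ ≤ K := by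
  have hu_int : Integrable (fun x => u x ^ 2) μ := .of_integral_ne_zero (by simp [hu])
  have hv_int : Integrable (fun x => v x ^ 2) μ := .of_integral_ne_zero (by simp [hv])
  have hF' : ∀ᵐ x ∂μ, ‖F x‖ ≤ K / 2 * (u x ^ 2 + v x ^ 2) := by
    filter_upwards [hF] with x hx
    have amgm := two_mul_le_add_sq |u x| |v x|
    rw [sq_abs, sq_abs] at amgm
    nlinarith
  calc ‖∫ x, F x ∂μ‖ ≤ ∫ x, K / 2 * (u x ^ 2 + v x ^ 2) ∂μ :=
        norm_integral_le_of_norm_le ((hu_int.add hv_int).const_mul _) hF'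
    _ = K := by rw [integral_const_mul, integral_add hu_int hv_int, hu, hv]; ring

section Trigonometry

variable (n : ℕ) (x : ℝ)

theorem abs_sin_natCast_mul_le : |sin (n * x)| ≤ n * |sin x| := by
  induction n with
  | zero => simp
  | succ k ih =>
    rw [Nat.cast_succ, add_one_mul, sin_add, add_one_mul]
    calc |sin (k * x) * cos x + cos (k * x) * sin x|
        ≤ |sin (k * x)| * |cos x| + |cos (k * x)| * |sin x| := by
          simpa only [abs_mul] using abs_add_le (sin (k * x) * cos x) (cos (k * x) * sin x)
      _ ≤ |sin (k * x)| * 1 + 1 * |sin x| := by gcongr <;> exact abs_cos_le_one _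
      _ ≤ k * |sin x| + |sin x| := by linarith

theorem abs_sin_natCast_mul_div_sin_le : |sin (n * x) / sin x| ≤ n := by
  rw [abs_div]
  exact div_le_of_le_mul₀ (abs_nonneg _) n.cast_nonneg (abs_sin_natCast_mul_le n x)

theorem abs_sin_natCast_mul_mul_cot_le : |sin (n * x) * cot x| ≤ n := by
  have factor : sin (n * x) * cot x = sin (n * x) / sin x * cos x := by
    rw [cot_eq_cos_div_sin]; ring
  rw [factor, abs_mul]
  exact (mul_le_of_le_one_right (abs_nonneg _) (abs_cos_le_one x)).trans
    (abs_sin_natCast_mul_div_sin_le n x)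

theorem continuous_sq_sin_natCast_mul_mul_cot :
    Continuous fun x : ℝ => sin (n * x) ^ 2 * cot x := by
  refine continuous_iff_continuousAt.2 fun x => ?_
  by_cases hx : sin x = 0
  · have hzero : sin (n * x) = 0 := by
      simpa [hx] using abs_sin_natCast_mul_le n x
    have hmajor : Filter.Tendsto (fun y => |sin (n * y)| * n) (nhds x) (nhds 0) := by
      simpa [hzero] using (by fun_prop : Continuous fun y : ℝ => |sin (n * y)| * n).tendsto x
    rw [ContinuousAt, hzero, zero_pow two_ne_zero, zero_mul]
    refine squeeze_zero_norm (fun y => ?_) hmajor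
    rw [norm_eq_abs, sq, mul_assoc, abs_mul]
    exact mul_le_mul_of_nonneg_left (abs_sin_natCast_mul_mul_cot_le n y) (abs_nonneg _)
  · simp only [cot_eq_cos_div_sin]
    fun_prop (disch := assumption)

variable {n x}

theorem hasDerivAt_cot (hx : sin x ≠ 0) : HasDerivAt cot (-(1 + cot x ^ 2)) x := by
  have h := (hasDerivAt_cos x).fun_div (hasDerivAt_sin x) hx
  simp only [← cot_eq_cos_div_sin] at h
  refine h.congr_deriv ?_
  rw [cot_eq_cos_div_sin]
  field_simp
  ring

theorem sin_sub_one_mul_div_sin (a : ℝ) (hx : sin x ≠ 0) :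
    sin ((a - 1) * x) / sin x = sin (a * x) * cot x - cos (a * x) := by
  rw [sub_one_mul, sin_sub, cot_eq_cos_div_sin]
  field_simp

theorem abs_sin_mul_cot_sub_cos_le (hn : n ≠ 0) (hx : sin x ≠ 0) :
    |sin (n * x) * cot x - cos (n * x)| ≤ n - 1 := by
  have h := abs_sin_natCast_mul_div_sin_le (n - 1) x
  rwa [Nat.cast_pred (Nat.pos_of_ne_zero hn), sin_sub_one_mul_div_sin _ hx] at h

theorem abs_mul_sin_mul_cot_sub_cos_le (hn : n ≠ 0) (hx : sin x ≠ 0) :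
    |n * (sin (n * x) * cot x) - cos (n * x)| ≤ (n : ℝ) ^ 2 - 1 := by
  have hn1 : (0 : ℝ) ≤ n - 1 := sub_nonneg.2 (Nat.one_le_cast.2 (Nat.one_le_iff_ne_zero.2 hn))
  calc |n * (sin (n * x) * cot x) - cos (n * x)|
      = |(n - 1) * (sin (n * x) * cot x) + (sin (n * x) * cot x - cos (n * x))| := by ring_nf
    _ ≤ (n - 1) * |sin (n * x) * cot x| + |sin (n * x) * cot x - cos (n * x)| := by
        simpa only [abs_mul, abs_of_nonneg hn1] using
          abs_add_le ((n - 1) * (sin (n * x) * cot x)) (sin (n * x) * cot x - cos (n * x))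
    _ ≤ (n - 1) * n + (n - 1) := by
        gcongr
        exacts [abs_sin_natCast_mul_mul_cot_le n x, abs_sin_mul_cot_sub_cos_le hn hx]
    _ = (n : ℝ) ^ 2 - 1 := by ring

end Trigonometry

/-- The function `a cos (a x) - sin (a x) cot x = sin x · (sin (a x) / sin x)'`. Up to normalization
it is `tan x · e_j'(x) / ω_j` at `a = ω_j`, and its reflection under `x ↦ π / 2 - x` is, up to
sign, `tan x · e_j(x)`. -/
noncomputable def cotKernel (a x : ℝ) : ℝ :=
  a * cos (a * x) - sin (a * x) * cot x

namespace cotKernel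

theorem abs_le {n : ℕ} {x : ℝ} (hn : n ≠ 0) (hx : sin x ≠ 0) :
    |cotKernel n x| ≤ 2 * (n - 1) := by
  have hn1 : (0 : ℝ) ≤ n - 1 := sub_nonneg.2 (Nat.one_le_cast.2 (Nat.one_le_iff_ne_zero.2 hn))
  calc |cotKernel n x|
      = |(n - 1) * cos (n * x) - (sin (n * x) * cot x - cos (n * x))| := by
        rw [cotKernel]; ring_nf
    _ ≤ (n - 1) * |cos (n * x)| + |sin (n * x) * cot x - cos (n * x)| := by
        simpa only [abs_mul, abs_of_nonneg hn1] using
          abs_sub ((n - 1) * cos (n * x)) (sin (n * x) * cot x - cos (n * x))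
    _ ≤ (n - 1) * 1 + (n - 1) := by
        gcongr
        exacts [abs_cos_le_one _, abs_sin_mul_cot_sub_cos_le hn hx]
    _ = 2 * (n - 1) := by ring

theorem pi_div_two_sub {a : ℝ} (ha : cos (a * (π / 2)) = 0) (x : ℝ) :
    cotKernel a (π / 2 - x) = sin (a * (π / 2)) * (a * sin (a * x) - cos (a * x) * tan x) := by
  rw [cotKernel, mul_sub, cos_sub, sin_sub, ha, cot_eq_cos_div_sin, cos_pi_div_two_sub,
    sin_pi_div_two_sub, tan_eq_sin_div_cos]
  ring

/-- An antiderivative of `cotKernel a x ^ 2`, read off from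
`cotKernel a x ^ 2 = a² cos² (a x) - sin² (a x) - (sin² (a x) cot x)'`. The junk value `cot 0 = 0`
makes it continuous at the origin. -/
noncomputable def sqAntideriv (a x : ℝ) : ℝ :=
  (a ^ 2 - 1) / 2 * x + (a ^ 2 + 1) / (4 * a) * sin (2 * (a * x)) - sin (a * x) ^ 2 * cot x

theorem hasDerivAt_sqAntideriv {a x : ℝ} (ha : a ≠ 0) (hx : sin x ≠ 0) :
    HasDerivAt (sqAntideriv a) (cotKernel a x ^ 2) x := by
  have hlin : HasDerivAt (fun y => a * y) a x := by
    simpa using (hasDerivAt_id x).const_mul a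
  have hid := (hasDerivAt_id x).const_mul ((a ^ 2 - 1) / 2)
  have hsin := (hlin.const_mul 2).sin.const_mul ((a ^ 2 + 1) / (4 * a))
  have hsin_sq_cot := (hlin.sin.pow 2).mul (hasDerivAt_cot hx)
  refine ((hid.add hsin).sub hsin_sq_cot).congr_deriv ?_
  rw [cotKernel, cos_two_mul]
  simp only [Pi.pow_apply]
  field_simp
  linear_combination 8 * sin_sq_add_cos_sq (a * x)

theorem integral_sq {n : ℕ} (hn : n ≠ 0) :
    ∫ x in (0 : ℝ)..(π / 2), cotKernel n x ^ 2 = ((n : ℝ) ^ 2 - 1) * π / 4 := by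
  have hcont : Continuous (sqAntideriv n) :=
    Continuous.sub (by fun_prop) (continuous_sq_sin_natCast_mul_mul_cot n)
  have hderiv : ∀ x ∈ Set.Ioo 0 (π / 2), HasDerivAt (sqAntideriv n) (cotKernel n x ^ 2) x :=
    fun x hx => hasDerivAt_sqAntideriv (Nat.cast_ne_zero.2 hn)
      (sin_pos_of_pos_of_lt_pi hx.1 (by linarith [hx.2, pi_pos])).ne'
  have hint : IntegrableOn (fun x => cotKernel n x ^ 2) (Set.Ioc 0 (π / 2)) :=
    intervalIntegral.integrableOn_deriv_of_nonneg hcont.continuousOn hderiv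
      fun x _ => sq_nonneg _
  have hend : sin (2 * (n * (π / 2))) = 0 := by
    rw [show 2 * (n * (π / 2)) = n * π by ring, sin_nat_mul_pi]
  rw [intervalIntegral.integral_eq_sub_of_hasDerivAt_of_le pi_div_two_pos.le hcont.continuousOn
    hderiv ((intervalIntegrable_iff_integrableOn_Ioc_of_le pi_div_two_pos.le).2 hint)]
  simp only [sqAntideriv, hend, cot_eq_cos_div_sin, cos_pi_div_two, mul_zero, sin_zero]
  ring

end cotKernel

theorem ω_eq_natCast (j : ℕ) : ω j = (2 * j + 3 : ℕ) := by
  simp [ω]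

theorem three_le_ω (j : ℕ) : 3 ≤ ω j := by
  rw [ω]; linarith [j.cast_nonneg (α := ℝ)]

theorem ω_sq_sub_one_pos (j : ℕ) : 0 < ω j ^ 2 - 1 := by
  nlinarith [three_le_ω j]

theorem cos_ω_mul_pi_div_two (j : ℕ) : cos (ω j * (π / 2)) = 0 :=
  cos_eq_zero_iff.2 ⟨j + 1, by rw [ω]; push_cast; ring⟩

/-- The normalizing constant `(2/√π)·(ω_j² − 1)^(−1/2)` of the eigenfunction `e_j`. -/
noncomputable def eNormConst (j : ℕ) : ℝ :=
  (2 / √π) * (√(ω j ^ 2 - 1))⁻¹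

theorem eNormConst_nonneg (j : ℕ) : 0 ≤ eNormConst j := by
  unfold eNormConst; positivity

theorem eNormConst_mul_sqrt (j : ℕ) : eNormConst j * √(ω j ^ 2 - 1) = 2 / √π :=
  inv_mul_cancel_right₀ (sqrt_pos.2 (ω_sq_sub_one_pos j)).ne' _

theorem eNormConst_sq_mul (j : ℕ) : eNormConst j ^ 2 * ((ω j ^ 2 - 1) * π / 4) = 1 := by
  calc eNormConst j ^ 2 * ((ω j ^ 2 - 1) * π / 4)
      = (eNormConst j * √(ω j ^ 2 - 1)) ^ 2 * (π / 4) := by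
        rw [mul_pow, sq_sqrt (ω_sq_sub_one_pos j).le]; ring
    _ = 1 := by
        rw [eNormConst_mul_sqrt, div_pow, sq_sqrt pi_pos.le]; field_simp; norm_num

theorem abs_e_le (j : ℕ) {x : ℝ} (hx : sin x ≠ 0) : |e j x| ≤ 2 / √π * ω j := by
  have hω : 0 ≤ ω j := by linarith [three_le_ω j]
  have e_eq : e j x = eNormConst j * (ω j * (sin (ω j * x) * cot x) - cos (ω j * x)) := by
    rw [e, eNormConst, ← tan_inv_eq_cot]; ring
  have hbound : |ω j * (sin (ω j * x) * cot x) - cos (ω j * x)| ≤ ω j ^ 2 - 1 := by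
    rw [ω_eq_natCast]
    exact abs_mul_sin_mul_cot_sub_cos_le (by lia) hx
  calc |e j x| ≤ eNormConst j * (ω j ^ 2 - 1) := by
        rw [e_eq, abs_mul, abs_of_nonneg (eNormConst_nonneg j)]
        exact mul_le_mul_of_nonneg_left hbound (eNormConst_nonneg j)
    _ = 2 / √π * √(ω j ^ 2 - 1) := by
        rw [← eNormConst_mul_sqrt, mul_assoc, mul_self_sqrt (ω_sq_sub_one_pos j).le]
    _ ≤ 2 / √π * ω j := by
        gcongr
        exact sqrt_le_iff.2 ⟨hω, by linarith⟩

theorem e'_div_ω_mul_tan (j : ℕ) {x : ℝ} (hx : tan x ≠ 0) :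
    e' j x / ω j * tan x = eNormConst j * cotKernel (ω j) x := by
  have hω : ω j ≠ 0 := by linarith [three_le_ω j]
  rw [e', eNormConst, cotKernel, ← tan_inv_eq_cot]
  field_simp

theorem abs_e'_div_ω_mul_tan_le (j : ℕ) {x : ℝ} (hx : tan x ≠ 0) :
    |e' j x / ω j * tan x| ≤ 4 / √π := by
  have hsin : sin x ≠ 0 := fun h => hx (by rw [tan_eq_sin_div_cos, h, zero_div])
  have hker : |cotKernel (ω j) x| ≤ 2 * (ω j - 1) := by
    rw [ω_eq_natCast]
    exact cotKernel.abs_le (by lia) hsin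
  have hsqrt : ω j - 1 ≤ √(ω j ^ 2 - 1) := le_sqrt_of_sq_le (by nlinarith [three_le_ω j])
  calc |e' j x / ω j * tan x| = eNormConst j * |cotKernel (ω j) x| := by
        rw [e'_div_ω_mul_tan j hx, abs_mul, abs_of_nonneg (eNormConst_nonneg j)]
    _ ≤ eNormConst j * (2 * √(ω j ^ 2 - 1)) :=
        mul_le_mul_of_nonneg_left (by linarith) (eNormConst_nonneg j)
    _ = 2 * (eNormConst j * √(ω j ^ 2 - 1)) := by ring
    _ = 4 / √π := by rw [eNormConst_mul_sqrt]; ring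

theorem sq_e_mul_tan (j : ℕ) {x : ℝ} (hx : tan x ≠ 0) :
    (e j x * tan x) ^ 2 = (eNormConst j * cotKernel (ω j) (π / 2 - x)) ^ 2 := by
  have hcos := cos_ω_mul_pi_div_two j
  have hsin : sin (ω j * (π / 2)) ^ 2 = 1 := by rw [sin_sq, hcos]; norm_num
  have e_mul_tan : e j x * tan x =
      eNormConst j * (ω j * sin (ω j * x) - cos (ω j * x) * tan x) := by
    rw [e, eNormConst]
    field_simp
  rw [e_mul_tan, cotKernel.pi_div_two_sub hcos, mul_pow, mul_pow _ (_ * _), mul_pow (sin _), hsin,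
    one_mul]

theorem integral_sq_eNormConst_mul_cotKernel (j : ℕ) :
    ∫ x in (0 : ℝ)..(π / 2), (eNormConst j * cotKernel (ω j) x) ^ 2 = 1 := by
  have hker : ∫ x in (0 : ℝ)..(π / 2), cotKernel (ω j) x ^ 2 = (ω j ^ 2 - 1) * π / 4 := by
    rw [ω_eq_natCast]
    exact cotKernel.integral_sq (by lia)
  simp only [mul_pow, intervalIntegral.integral_const_mul, hker, eNormConst_sq_mul]

theorem integral_sq_e'_div_ω_mul_tan (j : ℕ) :
    ∫ x in Set.Ioo 0 (π / 2), (e' j x / ω j * tan x) ^ 2 = 1 := by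
  rw [← integral_sq_eNormConst_mul_cotKernel j, intervalIntegral.integral_of_le pi_div_two_pos.le,
    integral_Ioc_eq_integral_Ioo]
  refine setIntegral_congr_fun measurableSet_Ioo fun x hx => ?_
  exact congrArg (· ^ 2) (e'_div_ω_mul_tan j (tan_pos_of_pos_of_lt_pi_div_two hx.1 hx.2).ne')

theorem integral_sq_e_mul_tan (j : ℕ) :
    ∫ x in Set.Ioo 0 (π / 2), (e j x * tan x) ^ 2 = 1 := by
  calc ∫ x in Set.Ioo 0 (π / 2), (e j x * tan x) ^ 2
      = ∫ x in Set.Ioo 0 (π / 2), (eNormConst j * cotKernel (ω j) (π / 2 - x)) ^ 2 :=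
        setIntegral_congr_fun measurableSet_Ioo fun x hx =>
          sq_e_mul_tan j (tan_pos_of_pos_of_lt_pi_div_two hx.1 hx.2).ne'
    _ = ∫ x in (0 : ℝ)..(π / 2), (eNormConst j * cotKernel (ω j) (π / 2 - x)) ^ 2 := by
        rw [intervalIntegral.integral_of_le pi_div_two_pos.le, integral_Ioc_eq_integral_Ioo]
    _ = ∫ x in (0 : ℝ)..(π / 2), (eNormConst j * cotKernel (ω j) x) ^ 2 := by
        rw [intervalIntegral.integral_comp_sub_left
          (fun x => (eNormConst j * cotKernel (ω j) x) ^ 2), sub_self, sub_zero]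
    _ = 1 := integral_sq_eNormConst_mul_cotKernel j

theorem abs_integral_mul_e_mul_e'_div_ω_le (l m : ℕ) {u v : ℝ → ℝ}
    (hu : ∫ x in Set.Ioo 0 (π / 2), (u x * tan x) ^ 2 = 1)
    (hv : ∫ x in Set.Ioo 0 (π / 2), (v x * tan x) ^ 2 = 1) :
    |∫ x in Set.Ioo 0 (π / 2), u x * v x * e l x * (e' m x / ω m) * (sin x ^ 3 / cos x)| ≤
      8 / π * ω l := by
  have hω : 0 ≤ ω l := by linarith [three_le_ω l]
  have hK : 0 ≤ 8 / π * ω l := by positivity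
  rw [← norm_eq_abs]
  refine norm_integral_le_of_norm_le_mul_abs_mul_abs hK hu hv ?_
  filter_upwards [ae_restrict_mem measurableSet_Ioo] with x hx
  have hsin : sin x ≠ 0 := (sin_pos_of_pos_of_lt_pi hx.1 (by linarith [hx.2, pi_pos])).ne'
  have hcos : cos x ≠ 0 := (cos_pos_of_mem_Ioo ⟨by linarith [hx.1, pi_pos], hx.2⟩).ne'
  have htan : tan x ≠ 0 := (tan_pos_of_pos_of_lt_pi_div_two hx.1 hx.2).ne'
  have regroup : u x * v x * e l x * (e' m x / ω m) * (sin x ^ 3 / cos x) =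
      e l x * (e' m x / ω m * tan x) * cos x ^ 2 * ((u x * tan x) * (v x * tan x)) := by
    rw [tan_eq_sin_div_cos]
    field_simp
  rw [regroup, norm_eq_abs, abs_mul, abs_mul (u x * tan x)]
  gcongr
  calc |e l x * (e' m x / ω m * tan x) * cos x ^ 2|
      = |e l x| * |e' m x / ω m * tan x| * cos x ^ 2 := by
        rw [abs_mul, abs_mul, abs_of_nonneg (sq_nonneg (cos x))]
    _ ≤ 2 / √π * ω l * (4 / √π) * 1 := by
        gcongr
        exacts [abs_e_le l hsin, abs_e'_div_ω_mul_tan_le m htan, cos_sq_le_one x]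
    _ = 8 * ω l / √π ^ 2 := by ring
    _ = 8 / π * ω l := by rw [sq_sqrt pi_pos.le]; ring

/-- Growth of the quartic interaction coefficients `Ā` and `B̄`: for all `i, j, l, m ∈ ℕ`,
`|Ā_{ijl}^{(m)}| ≤ (8/π)·ω_l` and `|B̄_{ijl}^{(m)}| ≤ (8/π)·ω_l`, i.e. these Fourier
constants are `O(ω_l)`. -/
theorem quartic_interaction_coefficients_Abar_Bbar_growth (i j l m : ℕ) :
    |∫ x in Set.Ioo (0 : ℝ) (Real.pi / 2),
        (e' i x / ω i) * (e' j x / ω j) * e l x * (e' m x / ω m) *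
          (Real.sin x ^ 3 / Real.cos x)| ≤ (8 / Real.pi) * ω l ∧
    |∫ x in Set.Ioo (0 : ℝ) (Real.pi / 2),
        e i x * e j x * e l x * (e' m x / ω m) *
          (Real.sin x ^ 3 / Real.cos x)| ≤ (8 / Real.pi) * ω l := by
  exact ⟨abs_integral_mul_e_mul_e'_div_ω_le l m
      (integral_sq_e'_div_ω_mul_tan i) (integral_sq_e'_div_ω_mul_tan j),
    abs_integral_mul_e_mul_e'_div_ω_le l m (integral_sq_e_mul_tan i) (integral_sq_e_mul_tan j)⟩
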